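/- Let q be a braiding matrix with connected Dynkin diagram such that B_q is finite dimensional, and let B be a pre-Nichols algebra of q with finite GKdim. If i ∈ I_θ is a non-Cartan vertex (i.e. q̃_{ij} ≠ q_{ii}^{c_{ij}} for some j ≠ i), then x_i^{N_i} = 0 in B, where N_i = ord(q_{ii}). -/

import Mathlib

/-
Common framework for formalizing statements from
"Finite GK-dimensional pre-Nichols algebras of (super)modular and unidentified type"
(Angiono, Campagnolo, Sanmarco).

We work over `ℂ` (an algebraically closed field of characteristic zero).
A braiding matrix is `q : Fin θ → Fin θ → ℂˣ`.  The tensor algebra `T(V)` of the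
associated braided vector space of diagonal type is realized as the free algebra
on `Fin θ`.  The braided bialgebra structure on `T(V)` (the braided coproduct,
uniquely determined by the braiding matrix) is packaged in the structure
`BraidedStr`: its fields characterize it uniquely, so quantifying over
`S : BraidedStr θ q` is equivalent to using "the" braided coproduct.

A pre-Nichols algebra of `q` is the quotient `T(V)/I` by an ℕ₀-homogeneous
(two-sided) braided bi-ideal `I` generated in degrees ≥ 2 (`IsPreNicholsIdeal`);
such an ideal is automatically contained in the defining ideal `Jq` of the
Nichols algebra, which is the largest such ideal.  A statement
"`x = 0` holds in the pre-Nichols algebra `T(V)/I`" is formalized as `x ∈ I`.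
-/

open scoped TensorProduct

noncomputable section

namespace PreNicholsPaper

/-- The tensor algebra `T(V)` of the braided vector space of diagonal type of rank `θ`. -/
abbrev TV (θ : ℕ) := FreeAlgebra ℂ (Fin θ)

/-- The generator `x_i` of `T(V)`. -/
def gen (θ : ℕ) (i : Fin θ) : TV θ := FreeAlgebra.ι ℂ i

/-- The monomial `x_{i_1} ⋯ x_{i_n}` associated to a word. -/
def wordElem (θ : ℕ) (w : List (Fin θ)) : TV θ := (w.map (gen θ)).prod

/-- The multidegree in `ℕ₀^θ` of a word. -/
def degW (θ : ℕ) (w : List (Fin θ)) : Fin θ → ℕ := fun i => w.count i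

/-- `α_i`, the `i`-th canonical basis vector of `ℕ₀^θ`. -/
def δ (θ : ℕ) (i : Fin θ) : Fin θ → ℕ := fun k => if k = i then 1 else 0

/-- The bilinear form `ℕ₀^θ × ℕ₀^θ → ℂˣ` attached to the braiding matrix,
`q(α_i, α_j) = q_{ij}`, evaluated in `ℂ`. -/
def qf {θ : ℕ} (q : Fin θ → Fin θ → ℂˣ) (a b : Fin θ → ℕ) : ℂ :=
  ∏ i : Fin θ, ∏ j : Fin θ, (q i j : ℂ) ^ (a i * b j)

/-- `q̃_{ij} = q_{ij} q_{ji}`. -/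
def qtil {θ : ℕ} (q : Fin θ → Fin θ → ℂˣ) (i j : Fin θ) : ℂ := (q i j : ℂ) * (q j i : ℂ)

/-- The braided commutator `[u,v]_c = uv - q(a,b) vu` of elements `u, v`
which are homogeneous of multidegrees `a`, `b` respectively. -/
def brk {θ : ℕ} (q : Fin θ → Fin θ → ℂˣ) (a b : Fin θ → ℕ) (u v : TV θ) : TV θ :=
  u * v - qf q a b • (v * u)

/-- `(ad_c x_i) y = x_i y - q(α_i, b) y x_i` for `y` homogeneous of multidegree `b`. -/
def ad1 {θ : ℕ} (q : Fin θ → Fin θ → ℂˣ) (i : Fin θ) (b : Fin θ → ℕ) (y : TV θ) : TV θ :=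
  brk q (δ θ i) b (gen θ i) y

/-- The iterated braided adjoint `x_{i_1 i_2 ⋯ i_k} = (ad_c x_{i_1}) x_{i_2 ⋯ i_k}`. -/
def xw {θ : ℕ} (q : Fin θ → Fin θ → ℂˣ) : List (Fin θ) → TV θ
  | [] => 1
  | [i] => gen θ i
  | i :: w => ad1 q i (degW θ w) (xw q w)

/-- `(ad_c x_i)^m x_j`. -/
def adpow {θ : ℕ} (q : Fin θ → Fin θ → ℂˣ) (i j : Fin θ) : ℕ → TV θ
  | 0 => gen θ j
  | m + 1 => ad1 q i (fun k => m * δ θ i k + δ θ j k) (adpow q i j m)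

/-- The homogeneous component of total degree `n` of `T(V)`. -/
def homogTot (θ : ℕ) (n : ℕ) : Submodule ℂ (TV θ) :=
  Submodule.span ℂ {x | ∃ w : List (Fin θ), w.length = n ∧ x = wordElem θ w}

/-- The homogeneous component of multidegree `d ∈ ℕ₀^θ` of `T(V)`. -/
def homogD (θ : ℕ) (d : Fin θ → ℕ) : Submodule ℂ (TV θ) :=
  Submodule.span ℂ {x | ∃ w : List (Fin θ), degW θ w = d ∧ x = wordElem θ w}

/-- The braided bialgebra structure on `T(V)` determined by the braiding matrix `q`:
the braided coproduct `Δ` together with the multiplication `mulB` of the braided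
tensor product `T(V) ⊗ T(V)`.  These axioms determine `Δ` and `mulB` uniquely. -/
structure BraidedStr (θ : ℕ) (q : Fin θ → Fin θ → ℂˣ) where
  Δ : TV θ →ₗ[ℂ] TensorProduct ℂ (TV θ) (TV θ)
  mulB : TensorProduct ℂ (TV θ) (TV θ) →ₗ[ℂ]
    TensorProduct ℂ (TV θ) (TV θ) →ₗ[ℂ] TensorProduct ℂ (TV θ) (TV θ)
  mulB_spec : ∀ (a d : TV θ) (wb wc : List (Fin θ)),
    mulB (a ⊗ₜ[ℂ] wordElem θ wb) (wordElem θ wc ⊗ₜ[ℂ] d)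
      = qf q (degW θ wb) (degW θ wc) • ((a * wordElem θ wc) ⊗ₜ[ℂ] (wordElem θ wb * d))
  Δ_one : Δ 1 = 1 ⊗ₜ[ℂ] 1
  Δ_gen : ∀ i, Δ (gen θ i) = gen θ i ⊗ₜ[ℂ] 1 + 1 ⊗ₜ[ℂ] gen θ i
  Δ_mul : ∀ u v : TV θ, Δ (u * v) = mulB (Δ u) (Δ v)

variable {θ : ℕ} {q : Fin θ → Fin θ → ℂˣ}

/-- `x` is a primitive element. -/
def IsPrimitiveIn (S : BraidedStr θ q) (x : TV θ) : Prop :=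
  S.Δ x = x ⊗ₜ[ℂ] (1 : TV θ) + (1 : TV θ) ⊗ₜ[ℂ] x

/-- The submodule `I ⊗ T(V) + T(V) ⊗ J` of `T(V) ⊗ T(V)`. -/
def mixedPair (I J : Submodule ℂ (TV θ)) : Submodule ℂ (TensorProduct ℂ (TV θ) (TV θ)) :=
  Submodule.span ℂ
    ({x | ∃ a b : TV θ, a ∈ I ∧ x = a ⊗ₜ[ℂ] b} ∪ {x | ∃ a b : TV θ, b ∈ J ∧ x = a ⊗ₜ[ℂ] b})

/-- The submodule `I ⊗ T(V) + T(V) ⊗ I` of `T(V) ⊗ T(V)`. -/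
def mixedSub (I : Submodule ℂ (TV θ)) : Submodule ℂ (TensorProduct ℂ (TV θ) (TV θ)) :=
  mixedPair I I

/-- `I` is the defining ideal of a pre-Nichols algebra of `q`：an ℕ₀-homogeneous
two-sided (bi-)ideal of `T(V)` generated in degrees `≥ 2` which is also a coideal.
Such an ideal is automatically contained in the defining ideal `Jq` of the Nichols
algebra, and the pre-Nichols algebra is the quotient `T(V)/I`. -/
structure IsPreNicholsIdeal (S : BraidedStr θ q) (I : Submodule ℂ (TV θ)) : Prop where
  mul_left : ∀ a x : TV θ, x ∈ I → a * x ∈ I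
  mul_right : ∀ a x : TV θ, x ∈ I → x * a ∈ I
  homog_ge2 : I = Submodule.span ℂ {x | x ∈ I ∧ ∃ n, 2 ≤ n ∧ x ∈ homogTot θ n}
  coideal : ∀ x ∈ I, S.Δ x ∈ mixedSub I

/-- The defining ideal `J_q` of the Nichols algebra `B_q = T(V)/J_q`:
the maximal homogeneous braided Hopf ideal generated in degrees `≥ 2`. -/
def Jq (S : BraidedStr θ q) : Submodule ℂ (TV θ) := sSup {I | IsPreNicholsIdeal S I}

/-- The standard filtration of `T(V)`: span of words of length `≤ n`. -/
def Wfil (θ : ℕ) (n : ℕ) : Submodule ℂ (TV θ) :=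
  Submodule.span ℂ {x | ∃ w : List (Fin θ), w.length ≤ n ∧ x = wordElem θ w}

/-- The quotient algebra `T(V)/I` has finite Gelfand–Kirillov dimension, i.e.
the standard filtration of the (finitely generated) quotient has polynomial growth. -/
def FinGK (I : Submodule ℂ (TV θ)) : Prop :=
  ∃ C d : ℕ, ∀ n : ℕ, Module.finrank ℂ ((Wfil θ n).map I.mkQ) ≤ C * (n + 1) ^ d

/-- The Gelfand–Kirillov dimension of the quotient algebra `T(V)/I`. -/
def GKdim (I : Submodule ℂ (TV θ)) : ℝ :=
  Filter.limsup
    (fun n : ℕ => Real.log (Module.finrank ℂ ((Wfil θ n).map I.mkQ)) / Real.log n)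
    Filter.atTop

/-- `I` defines an eminent pre-Nichols algebra: it is a finite-GKdim pre-Nichols
algebra, and every finite-GKdim pre-Nichols algebra of `q` is a quotient of it. -/
def IsEminent (S : BraidedStr θ q) (I : Submodule ℂ (TV θ)) : Prop :=
  IsPreNicholsIdeal S I ∧ FinGK I ∧
    ∀ I' : Submodule ℂ (TV θ), IsPreNicholsIdeal S I' → FinGK I' → I ≤ I'

/-- The Dynkin diagram of the braiding matrix `q`: vertices `Fin θ`, an edge between
`i ≠ j` iff `q̃_{ij} ≠ 1`. -/
def dynkin {θ : ℕ} (q : Fin θ → Fin θ → ℂˣ) : SimpleGraph (Fin θ) :=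
  SimpleGraph.fromRel (fun i j => qtil q i j ≠ 1)

/-- The quantum number `(m)_t = 1 + t + ⋯ + t^{m-1}`. -/
def qnum (t : ℂ) (m : ℕ) : ℂ := ∑ k ∈ Finset.range m, t ^ k

/-- The set of `n ∈ ℕ₀` such that `(n+1)_{q_{ii}} (1 - q_{ii}^n q̃_{ij}) = 0`,
i.e. such that `(ad_c x_i)^{n+1} x_j = 0` in the Nichols algebra.  The entry
`c_{ij}` of the generalized Cartan matrix is `-(min of this set)`. -/
def cSet {θ : ℕ} (q : Fin θ → Fin θ → ℂˣ) (i j : Fin θ) : Set ℕ :=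
  {n | qnum (q i i : ℂ) (n + 1) * (1 - (q i i : ℂ) ^ n * qtil q i j) = 0}

/-- The generalized Cartan matrix of `q`. -/
def cij {θ : ℕ} (q : Fin θ → Fin θ → ℂˣ) (i j : Fin θ) : ℤ :=
  if i = j then 2 else -(Int.ofNat (sInf (cSet q i j)))

/-- All entries `c_{ij}` are defined at the vertex `i`. -/
def reflectable {θ : ℕ} (q : Fin θ → Fin θ → ℂˣ) (i : Fin θ) : Prop :=
  ∀ j, j ≠ i → (cSet q i j).Nonempty

/-- The `i`-th reflection of the braiding matrix:
`(r_i q)_{jk} = q(s_i α_j, s_i α_k)` where `s_i α_j = α_j - c_{ij} α_i`. -/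
def reflectMat {θ : ℕ} (q : Fin θ → Fin θ → ℂˣ) (i : Fin θ) : Fin θ → Fin θ → ℂˣ :=
  fun j k =>
    q j k * q j i ^ (-(cij q i k)) * q i k ^ (-(cij q i j)) * q i i ^ (cij q i j * cij q i k)

/-- The reflection `s_i` acting on `ℤ^θ`. -/
def sRefl {θ : ℕ} (q : Fin θ → Fin θ → ℂˣ) (i : Fin θ) (β : Fin θ → ℤ) : Fin θ → ℤ :=
  fun k => β k - (if k = i then ∑ j, cij q i j * β j else 0)

/-- The (real) roots of `q`, together with the base points of the Weyl groupoid at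
which they live: pairs `(q', β)` obtained from a simple root of `q` by iterated
reflections. -/
inductive ReachRoot {θ : ℕ} (q₀ : Fin θ → Fin θ → ℂˣ) :
    (Fin θ → Fin θ → ℂˣ) → (Fin θ → ℤ) → Prop
  | simple (j : Fin θ) : ReachRoot q₀ q₀ (fun k => if k = j then 1 else 0)
  | reflect {q' : Fin θ → Fin θ → ℂˣ} {β : Fin θ → ℤ} (i : Fin θ) :
      ReachRoot q₀ q' β → ReachRoot q₀ (reflectMat q' i) (sRefl q' i β)

/-- `q` has a finite (generalized) root system: all reflections are defined at every
point of the Weyl groupoid, and the set of roots so obtained is finite. -/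
def FiniteRootSystem {θ : ℕ} (q : Fin θ → Fin θ → ℂˣ) : Prop :=
  (∀ q' i, (∃ β, ReachRoot q q' β) → reflectable q' i) ∧
    Set.Finite {β : Fin θ → ℤ | ∃ q', ReachRoot q q' β}

/-- Conjecture (Andruskiewitsch–Angiono–Heckenberger): the root system of a Nichols
algebra of diagonal type with finite Gelfand–Kirillov dimension is finite. -/
def AAH : Prop :=
  ∀ (θ : ℕ) (q : Fin θ → Fin θ → ℂˣ) (S : BraidedStr θ q), FinGK (Jq S) → FiniteRootSystem q

/-- The two-sided ideal of `T(V)` generated by a set. -/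
def idealGen (θ : ℕ) (s : Set (TV θ)) : Submodule ℂ (TV θ) :=
  Submodule.span ℂ {x | ∃ g ∈ s, ∃ a b : TV θ, x = a * g * b}

end PreNicholsPaper

namespace PreNicholsPaper

/-!
Let `N = ord q_ii` and suppose that `y = x_i^N` is not in `I`. By the q-binomial theorem `y` is
primitive. Non-Cartanness of `i` provides `x = x_j` with `q̃_ij^N ≠ 1`, that is, `y` and `x` have
a nontrivial double braiding `ab`, while `y` braids trivially with itself. The skew derivations dual
to `x` and `y` descend to the image of the subalgebra generated by `x` and `y` in `T(V)/I`: the one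
dual to `y` does because `I` contains no `x_i^N - c x_j^N`. Taking braided commutators, the
derivation dual to `y` sends `z_(n+1) = (ad_c y)^(n+1) x` to `(n+1)(1 - ab) z_n`, so in
characteristic zero all the `z_n` are nonzero and the `2^k` ordered products of distinct elements
among `z_0, …, z_(k-1)` are linearly independent in `T(V)/I`. They have degree at most `k²N`,
which contradicts polynomial growth.
-/

section LinearAlgebra

variable {K M : Type*} [Field K] [AddCommGroup M] [Module K M]

lemma linearIndependent_of_lowering {D : Module.End K M} {v : ℕ → M} {c : ℕ → K} (hv : v 0 ≠ 0)
    (hD₀ : D (v 0) = 0) (hD : ∀ n, D (v (n + 1)) = c n • v n) (hc : ∀ n, c n ≠ 0) :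
    LinearIndependent K v := by
  have key : ∀ (n : ℕ) (g : ℕ → K), ∑ k ∈ Finset.range n, g k • v k = 0 → ∀ k < n, g k = 0 := by
    intro n
    induction n with
    | zero => simp
    | succ n ih =>
      intro g hg
      have hDg := congrArg D hg
      rw [Finset.sum_range_succ', map_add, map_smul, hD₀, smul_zero, add_zero, map_sum,
        map_zero] at hDg
      simp only [map_smul, hD, smul_smul] at hDg
      have hsucc : ∀ k < n, g (k + 1) = 0 := fun k hk =>
        (mul_eq_zero.1 (ih (fun k => g (k + 1) * c k) hDg k hk)).resolve_right (hc k)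
      rw [Finset.sum_range_succ', Finset.sum_eq_zero fun k hk => by
        rw [hsucc k (Finset.mem_range.1 hk), zero_smul], zero_add, smul_eq_zero] at hg
      rintro (_ | k) hk
      exacts [hg.resolve_right hv, hsucc k (by omega)]
  rw [linearIndependent_iff]
  intro l hl
  obtain ⟨n, hn⟩ := l.support.exists_nat_subset_range
  rw [Finsupp.linearCombination_apply, Finsupp.sum_of_support_subset l hn _ (by simp)] at hl
  ext k
  by_contra hk
  exact hk (key n l hl k (Finset.mem_range.1 (hn (Finsupp.mem_support_iff.2 hk))))

lemma finrank_sup_map_of_comp_eq_smul {P : Submodule K M} [FiniteDimensional K P]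
    {Z D : Module.End K M} {κ : K} (hκ : κ ≠ 0) (hD : ∀ u ∈ P, D u = 0)
    (hDZ : ∀ u ∈ P, D (Z u) = κ • u) :
    Module.finrank K ↥(P ⊔ P.map Z) = 2 * Module.finrank K P := by
  have hinj : ∀ u ∈ P, D (Z u) = 0 → u = 0 := fun u hu h0 =>
    (smul_eq_zero.1 ((hDZ u hu).symm.trans h0)).resolve_left hκ
  have hdisj : Disjoint P (P.map Z) := by
    rw [Submodule.disjoint_def]
    rintro _ hv ⟨u, hu, rfl⟩
    rw [hinj u hu (hD _ hv), map_zero]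
  have hmap : Module.finrank K (P.map Z) = Module.finrank K P := by
    rw [← LinearMap.range_domRestrict]
    refine LinearMap.finrank_range_of_inj <| LinearMap.ker_eq_bot.1 <|
      LinearMap.ker_eq_bot'.2 fun u hu => Subtype.ext <| hinj u u.2 ?_
    rw [← LinearMap.domRestrict_apply, hu, map_zero]
  have hsum := Submodule.finrank_sup_add_finrank_inf_eq P (P.map Z)
  rw [hdisj.eq_bot, finrank_bot, add_zero, hmap] at hsum
  rw [hsum, two_mul]

/-- `T` maps `U` into `U` and `U ∩ I` into `I`, and so acts on `U / (U ∩ I)`. -/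
structure ActsOnSubquotient (U I : Submodule K M) (T : Module.End K M) : Prop where
  mem_left : ∀ u ∈ U, T u ∈ U
  mem_right : ∀ u ∈ U, u ∈ I → T u ∈ I

/-- The endomorphism of `U / (U ∩ I)` induced by `T`. -/
def ActsOnSubquotient.map {U I : Submodule K M} {T : Module.End K M}
    (hT : ActsOnSubquotient U I T) : Module.End K (U ⧸ I.submoduleOf U) :=
  (I.submoduleOf U).mapQ (I.submoduleOf U) (T.restrict hT.mem_left)
    fun u hu => hT.mem_right u u.2 hu

lemma finrank_le_finrank_map_mkQ {U I W : Submodule K M} [FiniteDimensional K W]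
    {P : Submodule K (U ⧸ I.submoduleOf U)}
    (hP : P ≤ (W.submoduleOf U).map (I.submoduleOf U).mkQ) :
    Module.finrank K P ≤ Module.finrank K (W.map I.mkQ) := by
  have hinj : Function.Injective ((I.submoduleOf U).mapQ I U.subtype le_rfl) :=
    LinearMap.ker_eq_bot.1 <| (Submodule.ker_mapQ _ _ _ _).trans (Submodule.mkQ_map_self _)
  rw [(Submodule.equivMapOfInjective _ hinj P).finrank_eq]
  refine Submodule.finrank_mono ((Submodule.map_mono hP).trans ?_)
  rintro _ ⟨_, ⟨u, hu, rfl⟩, rfl⟩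
  exact ⟨u, hu, rfl⟩

end LinearAlgebra

section BraidedWeylAlgebra

/-- The iterated braided commutators `z_n = (ad_c y)^n x`, for a braiding with `q_{yy} = 1` and
`q_{yx} = b`. -/
def adIter {K E : Type*} [CommRing K] [Ring E] [Algebra K E] (b : K) (y x : E) : ℕ → E
  | 0 => x
  | n + 1 => y * adIter b y x n - b • (adIter b y x n * y)

/-- The relations between the multiplications by two elements `x`, `y` and the skew derivations
`dx`, `dy` dual to them, for a braiding with `q_{yy} = 1`, `q_{xy} = a`, `q_{yx} = b` and
`q_{xx} = p`. -/
structure BraidedWeylRel {K E : Type*} [CommRing K] [Ring E] [Algebra K E] (x y dx dy : E)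
    (a b p : K) : Prop where
  dy_mul_y : dy * y = 1 + y * dy
  dy_mul_x : dy * x = a • (x * dy)
  dx_mul_y : dx * y = b • (y * dx)
  dx_mul_x : dx * x = 1 + p • (x * dx)

namespace BraidedWeylRel

section Algebra

variable {K E : Type*} [CommRing K] [Ring E] [Algebra K E] {x y dx dy : E} {a b p : K}

lemma dy_mul_adIter_succ (h : BraidedWeylRel x y dx dy a b p) (n : ℕ) :
    dy * adIter b y x (n + 1) = (((n : K) + 1) * (1 - a * b)) • adIter b y x n
      + a • (adIter b y x (n + 1) * dy) := by
  induction n with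
  | zero =>
    calc dy * adIter b y x 1
        = dy * y * x - b • (dy * x * y) := by
          simp only [adIter, mul_sub, mul_smul_comm, mul_assoc]
      _ = x + y * (dy * x) - (b * a) • (x * (dy * y)) := by
          simp only [h.dy_mul_y, h.dy_mul_x, add_mul, one_mul, smul_mul_assoc, smul_smul, mul_assoc]
      _ = _ := by
          simp only [h.dy_mul_y, h.dy_mul_x, adIter, mul_add, mul_one, mul_smul_comm, sub_mul,
            smul_mul_assoc, mul_assoc, Nat.cast_zero]
          module
  | succ n ih =>
    calc dy * adIter b y x (n + 2)
        = dy * y * adIter b y x (n + 1) - b • (dy * adIter b y x (n + 1) * y) := by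
          simp only [adIter.eq_2 b y x (n + 1), mul_sub, mul_smul_comm, mul_assoc]
      _ = adIter b y x (n + 1) + y * (dy * adIter b y x (n + 1))
            - b • (dy * adIter b y x (n + 1) * y) := by
          rw [h.dy_mul_y, add_mul, one_mul, mul_assoc]
      _ = _ := by
          rw [ih]
          simp only [h.dy_mul_y, adIter, mul_add, add_mul, mul_one, mul_smul_comm, mul_sub, sub_mul,
            smul_mul_assoc, mul_assoc, Nat.cast_succ]
          module

lemma dx_mul_adIter_succ (h : BraidedWeylRel x y dx dy a b p) (n : ℕ) :
    dx * adIter b y x (n + 1) = (b ^ (n + 1) * p) • (adIter b y x (n + 1) * dx) := by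
  induction n with
  | zero =>
    calc dx * adIter b y x 1
        = dx * y * x - b • (dx * x * y) := by
          simp only [adIter, mul_sub, mul_smul_comm, mul_assoc]
      _ = b • (y * (dx * x)) - b • (y + p • (x * (dx * y))) := by
          simp only [h.dx_mul_y, h.dx_mul_x, add_mul, one_mul, smul_mul_assoc, mul_assoc]
      _ = _ := by
          simp only [h.dx_mul_y, h.dx_mul_x, adIter, mul_add, mul_one, mul_smul_comm, sub_mul,
            smul_mul_assoc, mul_assoc]
          module
  | succ n ih =>
    calc dx * adIter b y x (n + 2)
        = dx * y * adIter b y x (n + 1) - b • (dx * adIter b y x (n + 1) * y) := by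
          simp only [adIter.eq_2 b y x (n + 1), mul_sub, mul_smul_comm, mul_assoc]
      _ = b • (y * (dx * adIter b y x (n + 1))) - b • (dx * adIter b y x (n + 1) * y) := by
          rw [h.dx_mul_y, smul_mul_assoc, mul_assoc]
      _ = _ := by
          rw [ih]
          simp only [h.dx_mul_y, adIter.eq_2 b y x (n + 1), mul_smul_comm, sub_mul,
            smul_mul_assoc, mul_assoc]
          module

end Algebra

section Module

variable {K M : Type*} [Field K] [AddCommGroup M] [Module K M]

/-- The vectors killed by `dx ∘ dy ^ t` for all `t < m`. -/
def loweringKer (dx dy : Module.End K M) (m : ℕ) : Submodule K M :=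
  ⨅ t < m, LinearMap.ker (dx * dy ^ t)

lemma mem_loweringKer {dx dy : Module.End K M} {m : ℕ} {u : M} :
    u ∈ loweringKer dx dy m ↔ ∀ t < m, dx ((dy ^ t) u) = 0 := by
  simp [loweringKer, Submodule.mem_iInf]

lemma loweringKer_antitone (dx dy : Module.End K M) : Antitone (loweringKer dx dy) :=
  fun _ _ hmn _ hu => mem_loweringKer.2 fun t ht => mem_loweringKer.1 hu t (ht.trans_le hmn)

lemma dy_mem_loweringKer {dx dy : Module.End K M} {m : ℕ} {u : M}
    (hu : u ∈ loweringKer dx dy (m + 1)) : dy u ∈ loweringKer dx dy m :=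
  mem_loweringKer.2 fun t ht => by
    simpa [pow_succ] using mem_loweringKer.1 hu (t + 1) (by omega)

/-- The span of the ordered products of distinct elements among `z_m, …, z_{m+k-1}`, applied
to `e`, where `z_n = (ad_c y)^n x`. -/
def pbwSpan (b : K) (y x : Module.End K M) (e : M) : ℕ → ℕ → Submodule K M
  | 0, _ => K ∙ e
  | k + 1, m => pbwSpan b y x e k (m + 1) ⊔ (pbwSpan b y x e k (m + 1)).map (adIter b y x m)

instance (b : K) (y x : Module.End K M) (e : M) (k m : ℕ) :
    FiniteDimensional K (pbwSpan b y x e k m) := by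
  induction k generalizing m with
  | zero => exact inferInstanceAs (FiniteDimensional K (K ∙ e))
  | succ k ih =>
    have := ih (m + 1)
    exact Submodule.finite_sup _ _

variable {x y dx dy : Module.End K M} {a b p : K} {e : M}

lemma adIter_mem_filtration {W : ℕ → Submodule K M} {N : ℕ}
    (hx : ∀ n, W n ≤ (W (n + N)).comap x) (hy : ∀ n, W n ≤ (W (n + N)).comap y) (m : ℕ) {n : ℕ}
    {u : M} (hu : u ∈ W n) : adIter b y x m u ∈ W (n + (m + 1) * N) := by
  induction m generalizing n u with
  | zero => simpa [adIter] using hx n hu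
  | succ m ih =>
    have hyz : y (adIter b y x m u) ∈ W (n + (m + 1) * N + N) := hy _ (ih hu)
    have hzy : adIter b y x m (y u) ∈ W (n + N + (m + 1) * N) := ih (hy n hu)
    have e₁ : n + (m + 1 + 1) * N = n + (m + 1) * N + N := by ring
    have e₂ : n + N + (m + 1) * N = n + (m + 1) * N + N := by ring
    rw [e₁]
    exact Submodule.sub_mem _ hyz (Submodule.smul_mem _ _ (e₂ ▸ hzy))

lemma pbwSpan_le_filtration {W : ℕ → Submodule K M} (hW : Monotone W) {N : ℕ}
    (hx : ∀ n, W n ≤ (W (n + N)).comap x) (hy : ∀ n, W n ≤ (W (n + N)).comap y)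
    (he : e ∈ W 0) (k m : ℕ) : pbwSpan b y x e k m ≤ W (k * (m + k) * N) := by
  induction k generalizing m with
  | zero => simpa [pbwSpan] using he
  | succ k ih =>
    refine sup_le ((ih (m + 1)).trans (hW ?_)) (Submodule.map_le_iff_le_comap.2 fun u hu =>
      hW ?_ (adIter_mem_filtration hx hy m (ih (m + 1) hu)))
    · exact Nat.mul_le_mul_right _ (Nat.mul_le_mul (by omega) (by omega))
    · rw [← add_mul]
      exact Nat.mul_le_mul_right _ (by nlinarith)

lemma dx_dy_pow_adIter_of_lt (h : BraidedWeylRel x y dx dy a b p) {s n : ℕ} (hsn : s < n) {u : M}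
    (hu : u ∈ loweringKer dx dy (s + 1)) : dx ((dy ^ s) (adIter b y x n u)) = 0 := by
  obtain ⟨n, rfl⟩ := Nat.exists_eq_add_one.2 (Nat.zero_lt_of_lt hsn)
  induction s generalizing n u with
  | zero =>
    have hdxu : dx u = 0 := mem_loweringKer.1 hu 0 one_pos
    simpa [hdxu] using LinearMap.congr_fun (h.dx_mul_adIter_succ n) u
  | succ s ih =>
    obtain ⟨n, rfl⟩ := Nat.exists_eq_add_one.2 (show 0 < n by omega)
    have hcomm := LinearMap.congr_fun (h.dy_mul_adIter_succ (n + 1)) u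
    simp only [Module.End.mul_apply, LinearMap.add_apply, LinearMap.smul_apply] at hcomm
    rw [pow_succ, Module.End.mul_apply, hcomm]
    simp only [map_add, map_smul]
    rw [ih (loweringKer_antitone _ _ (Nat.le_succ _) hu) n (by omega),
      ih (dy_mem_loweringKer hu) (n + 1) (by omega), smul_zero, smul_zero, add_zero]

lemma dx_dy_pow_adIter_self (h : BraidedWeylRel x y dx dy a b p) {s : ℕ} {u : M}
    (hu : u ∈ loweringKer dx dy (s + 1)) :
    dx ((dy ^ s) (adIter b y x s u)) = ((s.factorial : K) * (1 - a * b) ^ s) • u := by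
  induction s generalizing u with
  | zero =>
    have hdxu : dx u = 0 := mem_loweringKer.1 hu 0 one_pos
    simpa [adIter, hdxu] using LinearMap.congr_fun h.dx_mul_x u
  | succ s ih =>
    have hcomm := LinearMap.congr_fun (h.dy_mul_adIter_succ s) u
    simp only [Module.End.mul_apply, LinearMap.add_apply, LinearMap.smul_apply] at hcomm
    rw [pow_succ, Module.End.mul_apply, hcomm]
    simp only [map_add, map_smul]
    rw [ih (loweringKer_antitone _ _ (Nat.le_succ _) hu),
      h.dx_dy_pow_adIter_of_lt s.lt_succ_self (dy_mem_loweringKer hu), smul_zero, add_zero,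
      smul_smul]
    congr 1
    rw [Nat.factorial_succ]
    push_cast
    ring

lemma adIter_mem_loweringKer (h : BraidedWeylRel x y dx dy a b p) {m : ℕ} {u : M}
    (hu : u ∈ loweringKer dx dy (m + 1)) : adIter b y x m u ∈ loweringKer dx dy m :=
  mem_loweringKer.2 fun _ ht =>
    h.dx_dy_pow_adIter_of_lt ht (loweringKer_antitone _ _ (Nat.succ_le_succ ht.le) hu)

lemma pbwSpan_le_loweringKer (h : BraidedWeylRel x y dx dy a b p) (hdx : dx e = 0)
    (hdy : dy e = 0) (k m : ℕ) : pbwSpan b y x e k m ≤ loweringKer dx dy m := by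
  induction k generalizing m with
  | zero =>
    refine (Submodule.span_singleton_le_iff_mem _ _).2 (mem_loweringKer.2 fun t _ => ?_)
    cases t with
    | zero => exact hdx
    | succ t => rw [pow_succ, Module.End.mul_apply, hdy, map_zero, map_zero]
  | succ k ih =>
    exact sup_le ((ih (m + 1)).trans (loweringKer_antitone _ _ m.le_succ))
      (Submodule.map_le_iff_le_comap.2 fun u hu => h.adIter_mem_loweringKer (ih (m + 1) hu))

/-- `dx ∘ dy ^ m` kills every ordered product without `z_m` and strips a leading `z_m` off the
others, so each further `z_m` doubles the dimension. -/
lemma finrank_pbwSpan [CharZero K] (h : BraidedWeylRel x y dx dy a b p) (hab : a * b ≠ 1)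
    (he : e ≠ 0) (hdx : dx e = 0) (hdy : dy e = 0) (k m : ℕ) :
    Module.finrank K (pbwSpan b y x e k m) = 2 ^ k := by
  induction k generalizing m with
  | zero => exact finrank_span_singleton he
  | succ k ih =>
    have hle := h.pbwSpan_le_loweringKer hdx hdy k (m + 1)
    have hκ : (m.factorial : K) * (1 - a * b) ^ m ≠ 0 :=
      mul_ne_zero (Nat.cast_ne_zero.2 m.factorial_ne_zero) (pow_ne_zero _ (sub_ne_zero.2 hab.symm))
    rw [pbwSpan, finrank_sup_map_of_comp_eq_smul hκ (D := dx * dy ^ m)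
      (fun u hu => mem_loweringKer.1 (hle hu) m m.lt_succ_self)
      fun u hu => h.dx_dy_pow_adIter_self (hle hu), ih, pow_succ']

lemma subquotientMap (h : BraidedWeylRel x y dx dy a b p) {U I : Submodule K M}
    (hx : ActsOnSubquotient U I x) (hy : ActsOnSubquotient U I y)
    (hdx : ActsOnSubquotient U I dx) (hdy : ActsOnSubquotient U I dy) :
    BraidedWeylRel hx.map hy.map hdx.map hdy.map a b p where
  dy_mul_y := Submodule.linearMap_qext _ <| LinearMap.ext fun u =>
    congrArg (I.submoduleOf U).mkQ (Subtype.ext (LinearMap.congr_fun h.dy_mul_y u))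
  dy_mul_x := Submodule.linearMap_qext _ <| LinearMap.ext fun u =>
    congrArg (I.submoduleOf U).mkQ (Subtype.ext (LinearMap.congr_fun h.dy_mul_x u))
  dx_mul_y := Submodule.linearMap_qext _ <| LinearMap.ext fun u =>
    congrArg (I.submoduleOf U).mkQ (Subtype.ext (LinearMap.congr_fun h.dx_mul_y u))
  dx_mul_x := Submodule.linearMap_qext _ <| LinearMap.ext fun u =>
    congrArg (I.submoduleOf U).mkQ (Subtype.ext (LinearMap.congr_fun h.dx_mul_x u))

lemma two_pow_le_finrank_map_mkQ [CharZero K] (h : BraidedWeylRel x y dx dy a b p)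
    (hab : a * b ≠ 1) {U I : Submodule K M} (hx : ActsOnSubquotient U I x)
    (hy : ActsOnSubquotient U I y) (hdx : ActsOnSubquotient U I dx)
    (hdy : ActsOnSubquotient U I dy) (heU : e ∈ U) (heI : e ∉ I) (hdxe : dx e = 0)
    (hdye : dy e = 0) {W : ℕ → Submodule K M} [∀ n, FiniteDimensional K (W n)]
    (hW : Monotone W) {N : ℕ} (hWx : ∀ n, W n ≤ (W (n + N)).comap x)
    (hWy : ∀ n, W n ≤ (W (n + N)).comap y) (heW : e ∈ W 0) (k : ℕ) :
    2 ^ k ≤ Module.finrank K ((W (k * k * N)).map I.mkQ) := by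
  set π := (I.submoduleOf U).mkQ
  set W' : ℕ → Submodule K (U ⧸ I.submoduleOf U) := fun n => ((W n).submoduleOf U).map π
  have hW' : Monotone W' := fun m n hmn => Submodule.map_mono (Submodule.comap_mono (hW hmn))
  have hshift : ∀ {z : Module.End K M} (hz : ActsOnSubquotient U I z),
      (∀ n, W n ≤ (W (n + N)).comap z) → ∀ n, W' n ≤ (W' (n + N)).comap hz.map := by
    rintro z hz hWz n _ ⟨u, hu, rfl⟩
    exact ⟨⟨z u, hz.mem_left u u.2⟩, hWz n hu, rfl⟩
  set e' : U ⧸ I.submoduleOf U := π ⟨e, heU⟩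
  have he' : e' ≠ 0 := fun h0 => heI ((Submodule.Quotient.mk_eq_zero (I.submoduleOf U)).1 h0)
  have hkill : ∀ {z : Module.End K M} (hz : ActsOnSubquotient U I z), z e = 0 → hz.map e' = 0 :=
    fun hz hze => (congrArg π (Subtype.ext hze)).trans (map_zero π)
  have hle : pbwSpan b hy.map hx.map e' k 0 ≤ W' (k * k * N) := by
    simpa using pbwSpan_le_filtration hW' (hshift hx hWx) (hshift hy hWy)
      ⟨⟨e, heU⟩, heW, rfl⟩ k 0
  calc 2 ^ k = Module.finrank K (pbwSpan b hy.map hx.map e' k 0) :=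
        ((h.subquotientMap hx hy hdx hdy).finrank_pbwSpan hab he' (hkill hdx hdxe)
          (hkill hdy hdye) k 0).symm
    _ ≤ Module.finrank K ((W (k * k * N)).map I.mkQ) := finrank_le_finrank_map_mkQ hle

end Module

end BraidedWeylRel

end BraidedWeylAlgebra

section GaussianBinomial

/-- The Gaussian binomial coefficient `binom(k + l, k)_t`. -/
def gaussBinom {R : Type*} [CommRing R] (t : R) : ℕ → ℕ → R
  | 0, _ => 1
  | _ + 1, 0 => 1
  | k + 1, l + 1 => gaussBinom t k (l + 1) + t ^ (k + 1) * gaussBinom t (k + 1) l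

/-- The quantum factorial `(n)_t!`. -/
def quantumFactorial {R : Type*} [CommRing R] (t : R) (n : ℕ) : R :=
  ∏ m ∈ Finset.range n, ∑ k ∈ Finset.range (m + 1), t ^ k

variable {R : Type*} [CommRing R]

lemma gaussBinom_zero_right (t : R) (k : ℕ) : gaussBinom t k 0 = 1 := by
  cases k <;> simp [gaussBinom]

lemma quantumFactorial_succ (t : R) (n : ℕ) :
    quantumFactorial t (n + 1) = quantumFactorial t n * ∑ k ∈ Finset.range (n + 1), t ^ k :=
  Finset.prod_range_succ _ _

lemma geom_sum_add (t : R) (m n : ℕ) :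
    ∑ k ∈ Finset.range (m + n), t ^ k
      = ∑ k ∈ Finset.range m, t ^ k + t ^ m * ∑ k ∈ Finset.range n, t ^ k := by
  simp only [Finset.sum_range_add, Finset.mul_sum, pow_add]

lemma gaussBinom_mul_quantumFactorial (t : R) (k l : ℕ) :
    gaussBinom t k l * (quantumFactorial t k * quantumFactorial t l)
      = quantumFactorial t (k + l) := by
  induction k generalizing l with
  | zero => simp [gaussBinom, quantumFactorial]
  | succ k ihk =>
    induction l with
    | zero => simp [gaussBinom, quantumFactorial]
    | succ l ihl =>
      have ihk' := ihk (l + 1)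
      rw [quantumFactorial_succ t l] at ihk'
      rw [quantumFactorial_succ t k, add_right_comm] at ihl
      have hsplit := geom_sum_add t (k + 1) (l + 1)
      rw [show k + 1 + (l + 1) = k + l + 1 + 1 by omega] at hsplit ⊢
      rw [show k + (l + 1) = k + l + 1 by omega] at ihk'
      rw [gaussBinom, quantumFactorial_succ t (k + l + 1), hsplit, quantumFactorial_succ t k,
        quantumFactorial_succ t l]
      linear_combination (∑ m ∈ Finset.range (k + 1), t ^ m) * ihk'
        + t ^ (k + 1) * (∑ m ∈ Finset.range (l + 1), t ^ m) * ihl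

lemma quantumFactorial_ne_zero [IsDomain R] {t : R} {N n : ℕ} (ht : IsPrimitiveRoot t N)
    (hn : n < N) : quantumFactorial t n ≠ 0 := by
  refine Finset.prod_ne_zero_iff.2 fun m hm h0 => ?_
  have hmN : m + 1 < N := (Nat.succ_le_of_lt (Finset.mem_range.1 hm)).trans_lt hn
  refine ht.pow_ne_one_of_pos_of_lt m.succ_ne_zero hmN ?_
  rw [← sub_eq_zero, ← geom_sum_mul, h0, zero_mul]

lemma gaussBinom_eq_zero [IsDomain R] {t : R} {N k l : ℕ} (ht : IsPrimitiveRoot t N)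
    (hkl : k + l = N) (hk : k ≠ 0) (hl : l ≠ 0) : gaussBinom t k l = 0 := by
  obtain ⟨n, rfl⟩ := Nat.exists_eq_add_one.2 (show 0 < N by omega)
  have hN : quantumFactorial t (k + l) = 0 := by
    rw [hkl, quantumFactorial_succ, ht.geom_sum_eq_zero (by omega), mul_zero]
  rw [← gaussBinom_mul_quantumFactorial] at hN
  exact (mul_eq_zero.1 hN).resolve_right <| mul_ne_zero
    (quantumFactorial_ne_zero ht (by omega)) (quantumFactorial_ne_zero ht (by omega))

variable {E : Type*} [Ring E] [Algebra R E] {t : R} {x y : E}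

lemma mul_pow_of_mul_eq_smul (h : y * x = t • (x * y)) (k : ℕ) :
    y * x ^ k = t ^ k • (x ^ k * y) := by
  induction k with
  | zero => simp
  | succ k ih =>
    rw [pow_succ, ← mul_assoc, ih, smul_mul_assoc, mul_assoc, h, mul_smul_comm, smul_smul,
      ← mul_assoc, ← pow_succ]

lemma add_pow_of_mul_eq_smul (h : y * x = t • (x * y)) (n : ℕ) :
    (x + y) ^ n = ∑ kl ∈ Finset.HasAntidiagonal.antidiagonal n,
      gaussBinom t kl.1 kl.2 • (x ^ kl.1 * y ^ kl.2) := by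
  induction n with
  | zero => simp [gaussBinom]
  | succ n ih =>
    have hpascal : ∀ kl ∈ Finset.HasAntidiagonal.antidiagonal (n + 1),
        gaussBinom t kl.1 kl.2 = (if kl.1 = 0 then 0 else gaussBinom t (kl.1 - 1) kl.2)
          + if kl.2 = 0 then 0 else t ^ kl.1 * gaussBinom t kl.1 (kl.2 - 1) := by
      rintro ⟨k, l⟩ hkl
      rw [Finset.HasAntidiagonal.mem_antidiagonal] at hkl
      cases k <;> cases l <;> simp_all [gaussBinom, gaussBinom_zero_right]
    have hstep : ∀ k l : ℕ, (x + y) * (x ^ k * y ^ l)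
        = x ^ (k + 1) * y ^ l + t ^ k • (x ^ k * y ^ (l + 1)) := fun k l => by
      rw [add_mul, ← mul_assoc, ← pow_succ', ← mul_assoc, mul_pow_of_mul_eq_smul h,
        smul_mul_assoc, mul_assoc, ← pow_succ']
    rw [Finset.sum_congr rfl fun kl hkl => congrArg (· • (x ^ kl.1 * y ^ kl.2)) (hpascal kl hkl)]
    simp only [add_smul, Finset.sum_add_distrib]
    rw [pow_succ', ih, Finset.mul_sum, Finset.Nat.sum_antidiagonal_succ,
      Finset.Nat.sum_antidiagonal_succ' (n := n)]
    simp only [mul_smul_comm, hstep, smul_add, smul_smul, Finset.sum_add_distrib]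
    simp [mul_comm]

lemma add_pow_eq_add_of_isPrimitiveRoot [IsDomain R] (h : y * x = t • (x * y)) {N : ℕ}
    (hN : N ≠ 0) (ht : IsPrimitiveRoot t N) : (x + y) ^ N = x ^ N + y ^ N := by
  rw [add_pow_of_mul_eq_smul h, Finset.sum_eq_add (N, 0) (0, N) (by simp [hN])]
  · simp [gaussBinom, gaussBinom_zero_right]
  · rintro ⟨k, l⟩ hkl ⟨hl, hk⟩
    rw [Finset.HasAntidiagonal.mem_antidiagonal] at hkl
    rw [gaussBinom_eq_zero ht hkl, zero_smul]
    · rintro rfl; exact hk (by simpa using hkl)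
    · rintro rfl; exact hl (by simpa using hkl)
  · simp
  · simp

end GaussianBinomial

section Words

variable {θ : ℕ} {M : Type*} [AddCommGroup M] [Module ℂ M]

lemma wordElem_nil : wordElem θ [] = 1 := rfl

lemma wordElem_cons (k : Fin θ) (w : List (Fin θ)) :
    wordElem θ (k :: w) = gen θ k * wordElem θ w := by
  simp [wordElem]

lemma wordElem_singleton (k : Fin θ) : wordElem θ [k] = gen θ k := by
  simp [wordElem]

lemma wordElem_append (v w : List (Fin θ)) :
    wordElem θ (v ++ w) = wordElem θ v * wordElem θ w := by
  simp [wordElem]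

lemma wordElem_replicate (n : ℕ) (k : Fin θ) :
    wordElem θ (List.replicate n k) = gen θ k ^ n := by
  simp [wordElem]

lemma basisFreeMonoid_ofList (w : List (Fin θ)) :
    FreeAlgebra.basisFreeMonoid ℂ (Fin θ) (FreeMonoid.ofList w) = wordElem θ w := by
  calc FreeAlgebra.basisFreeMonoid ℂ (Fin θ) (FreeMonoid.ofList w)
      = FreeAlgebra.equivMonoidAlgebraFreeMonoid.symm
          (MonoidAlgebra.of ℂ (FreeMonoid (Fin θ)) (FreeMonoid.ofList w)) := by
        simp [FreeAlgebra.basisFreeMonoid]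
    _ = wordElem θ w := by
        induction w with
        | nil => rw [FreeMonoid.ofList_nil, map_one, map_one, wordElem_nil]
        | cons k w ih =>
          rw [FreeMonoid.ofList_cons, map_mul, map_mul, wordElem_cons, ih]
          simp [FreeAlgebra.equivMonoidAlgebraFreeMonoid, gen]

lemma linearMap_ext_wordElem {f g : TV θ →ₗ[ℂ] M}
    (h : ∀ w, f (wordElem θ w) = g (wordElem θ w)) : f = g :=
  (FreeAlgebra.basisFreeMonoid ℂ (Fin θ)).ext fun w => by
    rw [← FreeMonoid.ofList_toList w, basisFreeMonoid_ofList]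
    exact h _

lemma tensorProduct_ext_wordElem {f g : TV θ ⊗[ℂ] TV θ →ₗ[ℂ] M}
    (h : ∀ w t, f (wordElem θ w ⊗ₜ[ℂ] t) = g (wordElem θ w ⊗ₜ[ℂ] t)) : f = g :=
  TensorProduct.ext (linearMap_ext_wordElem fun w => LinearMap.ext fun t => h w t)

/-- The linear map on `T(V)` with prescribed values on words. -/
def wordMap (φ : List (Fin θ) → M) : TV θ →ₗ[ℂ] M :=
  (FreeAlgebra.basisFreeMonoid ℂ (Fin θ)).constr ℂ fun w => φ (FreeMonoid.toList w)

@[simp]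
lemma wordMap_wordElem (φ : List (Fin θ) → M) (w : List (Fin θ)) :
    wordMap φ (wordElem θ w) = φ w := by
  rw [← basisFreeMonoid_ofList, wordMap, Module.Basis.constr_basis, FreeMonoid.toList_ofList]

/-- The coordinate functional of a word. -/
def coord (w₀ : List (Fin θ)) : TV θ →ₗ[ℂ] ℂ := wordMap fun w => if w = w₀ then 1 else 0

lemma coord_wordElem (w₀ w : List (Fin θ)) :
    coord w₀ (wordElem θ w) = if w = w₀ then 1 else 0 := wordMap_wordElem _ _

lemma coord_one (w₀ : List (Fin θ)) : coord w₀ (1 : TV θ) = if [] = w₀ then 1 else 0 :=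
  coord_wordElem w₀ []

lemma coord_append_comp_mulLeft (v w : List (Fin θ)) :
    coord (v ++ w) ∘ₗ LinearMap.mulLeft ℂ (wordElem θ v) = coord w :=
  linearMap_ext_wordElem fun w' => by
    simp [← wordElem_append, coord_wordElem]

lemma coord_comp_mulLeft_of_not_prefix {v w : List (Fin θ)} (hvw : ¬ v <+: w) :
    coord w ∘ₗ LinearMap.mulLeft ℂ (wordElem θ v) = 0 :=
  linearMap_ext_wordElem fun w' => by
    rw [LinearMap.comp_apply, LinearMap.mulLeft_apply, ← wordElem_append, coord_wordElem,
      if_neg fun h => hvw ⟨w', h⟩, LinearMap.zero_apply]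

lemma coord_of_mem_homogTot {m : ℕ} {u : TV θ} (hu : u ∈ homogTot θ m) {w₀ : List (Fin θ)}
    (hw : w₀.length ≠ m) : coord w₀ u = 0 := by
  suffices homogTot θ m ≤ LinearMap.ker (coord w₀) from this hu
  refine Submodule.span_le.2 ?_
  rintro _ ⟨w, rfl, rfl⟩
  exact (coord_wordElem w₀ w).trans (if_neg fun h => hw (congrArg List.length h.symm))

/-- The projection of `T(V)` onto its component of total degree `n`. -/
def degProj (n : ℕ) : TV θ →ₗ[ℂ] TV θ :=
  wordMap fun w => if w.length = n then wordElem θ w else 0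

lemma degProj_wordElem (n : ℕ) (w : List (Fin θ)) :
    degProj n (wordElem θ w) = if w.length = n then wordElem θ w else 0 := wordMap_wordElem _ _

lemma degProj_of_mem_homogTot {m : ℕ} {u : TV θ} (hu : u ∈ homogTot θ m) (n : ℕ) :
    degProj n u = if m = n then u else 0 := by
  have h : Set.EqOn (degProj n) (if m = n then LinearMap.id else 0 : TV θ →ₗ[ℂ] TV θ)
      (homogTot θ m) := by
    refine LinearMap.eqOn_span' ?_
    rintro _ ⟨w, rfl, rfl⟩
    rw [degProj_wordElem]
    split_ifs <;> rfl
  rw [h hu]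
  split_ifs <;> rfl

lemma Wfil_mono : Monotone (Wfil θ) := fun _ _ h =>
  Submodule.span_mono fun _ ⟨w, hw, e⟩ => ⟨w, hw.trans h, e⟩

lemma wordElem_mul_mem_Wfil {v : List (Fin θ)} {m n : ℕ} (hv : v.length ≤ m) {u : TV θ}
    (hu : u ∈ Wfil θ n) : wordElem θ v * u ∈ Wfil θ (n + m) := by
  suffices Wfil θ n ≤ (Wfil θ (n + m)).comap (LinearMap.mulLeft ℂ (wordElem θ v)) from this hu
  refine Submodule.span_le.2 ?_
  rintro _ ⟨w, hw, rfl⟩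
  refine Submodule.subset_span ⟨v ++ w, ?_, (wordElem_append v w).symm⟩
  rw [List.length_append]
  omega

instance (n : ℕ) : FiniteDimensional ℂ (Wfil θ n) := by
  refine FiniteDimensional.span_of_finite ℂ
    (((List.finite_length_le (Fin θ) n).image (wordElem θ)).subset ?_)
  rintro _ ⟨w, hw, rfl⟩
  exact ⟨w, hw, rfl⟩

lemma degW_nil : degW θ [] = 0 := rfl

lemma degW_replicate (n : ℕ) (k : Fin θ) : degW θ (List.replicate n k) = Pi.single k n := by
  funext l
  rw [degW, List.count_replicate, Pi.single_apply]
  simp only [beq_iff_eq, eq_comm (a := k)]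

lemma degW_append (v w : List (Fin θ)) : degW θ (v ++ w) = degW θ v + degW θ w := by
  funext k
  simp [degW]

lemma degW_singleton (k : Fin θ) : degW θ [k] = Pi.single k 1 := degW_replicate 1 k

lemma qf_zero_left (q : Fin θ → Fin θ → ℂˣ) (b : Fin θ → ℕ) : qf q 0 b = 1 := by simp [qf]

lemma qf_zero_right (q : Fin θ → Fin θ → ℂˣ) (a : Fin θ → ℕ) : qf q a 0 = 1 := by simp [qf]

lemma qf_add_right (q : Fin θ → Fin θ → ℂˣ) (a b c : Fin θ → ℕ) :
    qf q a (b + c) = qf q a b * qf q a c := by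
  simp [qf, mul_add, pow_add, Finset.prod_mul_distrib]

lemma qf_single (q : Fin θ → Fin θ → ℂˣ) (k l : Fin θ) (m n : ℕ) :
    qf q (Pi.single k m) (Pi.single l n) = (q k l : ℂ) ^ (m * n) := by
  rw [qf, Finset.prod_eq_single k, Finset.prod_eq_single l]
  · simp
  · intro b _ hb; simp [hb]
  · simp
  · intro b _ hb; simp [hb]
  · simp

end Words

section Contraction

variable {θ : ℕ} {q : Fin θ → Fin θ → ℂˣ}

/-- The map `(h ⊗ id) ∘ Δ` on `T(V)`. -/
def contract (S : BraidedStr θ q) (h : TV θ →ₗ[ℂ] ℂ) : TV θ →ₗ[ℂ] TV θ :=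
  (TensorProduct.lid ℂ (TV θ)).toLinearMap ∘ₗ h.rTensor (TV θ) ∘ₗ S.Δ

lemma contract_one (S : BraidedStr θ q) (h : TV θ →ₗ[ℂ] ℂ) : contract S h 1 = h 1 • 1 := by
  simp [contract, S.Δ_one]

lemma contract_zero (S : BraidedStr θ q) : contract S 0 = 0 := by
  simp [contract]

lemma contract_smul (S : BraidedStr θ q) (c : ℂ) (h : TV θ →ₗ[ℂ] ℂ) :
    contract S (c • h) = c • contract S h := by
  simp [contract, LinearMap.rTensor_smul, LinearMap.comp_smul, LinearMap.smul_comp]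

/-- The diagonal action on `T(V)` of a multidegree `a`, through the bicharacter `q(a, ·)`. -/
def braidAct (q : Fin θ → Fin θ → ℂˣ) (a : Fin θ → ℕ) : TV θ →ₗ[ℂ] TV θ :=
  wordMap fun w => qf q a (degW θ w) • wordElem θ w

lemma braidAct_wordElem (q : Fin θ → Fin θ → ℂˣ) (a : Fin θ → ℕ) (w : List (Fin θ)) :
    braidAct q a (wordElem θ w) = qf q a (degW θ w) • wordElem θ w := wordMap_wordElem _ _

lemma coord_comp_braidAct (w₀ : List (Fin θ)) (a : Fin θ → ℕ) :
    coord w₀ ∘ₗ braidAct q a = qf q a (degW θ w₀) • coord w₀ :=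
  linearMap_ext_wordElem fun w => by
    rw [LinearMap.comp_apply, braidAct_wordElem, map_smul, LinearMap.smul_apply, coord_wordElem]
    split_ifs with h
    · rw [h]
    · rw [smul_zero, smul_zero]

lemma mulB_tmul_one (S : BraidedStr θ q) (a d : TV θ) (w : List (Fin θ)) :
    S.mulB (a ⊗ₜ[ℂ] 1) (wordElem θ w ⊗ₜ[ℂ] d) = (a * wordElem θ w) ⊗ₜ[ℂ] d := by
  have h := S.mulB_spec a d [] w
  rwa [wordElem_nil, degW_nil, qf_zero_left, one_smul, one_mul] at h

lemma mulB_one_tmul (S : BraidedStr θ q) (d : TV θ) (v w : List (Fin θ)) :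
    S.mulB (1 ⊗ₜ[ℂ] wordElem θ v) (wordElem θ w ⊗ₜ[ℂ] d)
      = qf q (degW θ v) (degW θ w) • (wordElem θ w ⊗ₜ[ℂ] (wordElem θ v * d)) := by
  rw [S.mulB_spec, one_mul]

lemma isPrimitiveIn_wordElem_singleton (S : BraidedStr θ q) (k : Fin θ) :
    IsPrimitiveIn S (wordElem θ [k]) := by
  rw [wordElem_singleton]
  exact S.Δ_gen k

lemma contract_wordElem_mul (S : BraidedStr θ q) {v : List (Fin θ)}
    (hv : IsPrimitiveIn S (wordElem θ v)) (h : TV θ →ₗ[ℂ] ℂ) (u : TV θ) :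
    contract S h (wordElem θ v * u) = contract S (h ∘ₗ LinearMap.mulLeft ℂ (wordElem θ v)) u
      + wordElem θ v * contract S (h ∘ₗ braidAct q (degW θ v)) u := by
  have key : (TensorProduct.lid ℂ (TV θ)).toLinearMap ∘ₗ h.rTensor (TV θ)
        ∘ₗ S.mulB (wordElem θ v ⊗ₜ[ℂ] 1 + 1 ⊗ₜ[ℂ] wordElem θ v)
      = (TensorProduct.lid ℂ (TV θ)).toLinearMap
          ∘ₗ (h ∘ₗ LinearMap.mulLeft ℂ (wordElem θ v)).rTensor (TV θ)
        + LinearMap.mulLeft ℂ (wordElem θ v) ∘ₗ (TensorProduct.lid ℂ (TV θ)).toLinearMap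
          ∘ₗ (h ∘ₗ braidAct q (degW θ v)).rTensor (TV θ) :=
    tensorProduct_ext_wordElem fun w t => by
      simp [mulB_tmul_one, mulB_one_tmul, braidAct_wordElem, smul_smul]
  have hu := LinearMap.congr_fun key (S.Δ u)
  rw [← hv] at hu
  simpa only [contract, LinearMap.comp_apply, LinearMap.add_apply, LinearMap.mulLeft_apply,
    S.Δ_mul] using hu

lemma contract_coord_append_wordElem_mul (S : BraidedStr θ q) {v : List (Fin θ)}
    (hv : IsPrimitiveIn S (wordElem θ v)) (w : List (Fin θ)) (u : TV θ) :
    contract S (coord (v ++ w)) (wordElem θ v * u) = contract S (coord w) u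
      + qf q (degW θ v) (degW θ (v ++ w)) • (wordElem θ v * contract S (coord (v ++ w)) u) := by
  rw [contract_wordElem_mul S hv, coord_append_comp_mulLeft, coord_comp_braidAct, contract_smul,
    LinearMap.smul_apply, mul_smul_comm]

lemma contract_coord_wordElem_mul_of_not_prefix (S : BraidedStr θ q) {v w : List (Fin θ)}
    (hv : IsPrimitiveIn S (wordElem θ v)) (hvw : ¬ v <+: w) (u : TV θ) :
    contract S (coord w) (wordElem θ v * u)
      = qf q (degW θ v) (degW θ w) • (wordElem θ v * contract S (coord w) u) := by
  rw [contract_wordElem_mul S hv, coord_comp_mulLeft_of_not_prefix hvw, contract_zero,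
    LinearMap.zero_apply, zero_add, coord_comp_braidAct, contract_smul, LinearMap.smul_apply,
    mul_smul_comm]

lemma contract_coord_nil (S : BraidedStr θ q) : contract S (coord []) = LinearMap.id := by
  refine linearMap_ext_wordElem fun w => ?_
  induction w with
  | nil => rw [wordElem_nil, contract_one, coord_one, if_pos rfl, one_smul, LinearMap.id_apply]
  | cons k w ih =>
    rw [← List.singleton_append, wordElem_append, contract_coord_wordElem_mul_of_not_prefix S
      (isPrimitiveIn_wordElem_singleton S k) (by simp), ih, degW_nil, qf_zero_right, one_smul,
      LinearMap.id_apply, LinearMap.id_apply]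

/-- The span of the tensors `w ⊗ t` with `w` a word in the set `Ws`. -/
def leftSpan (Ws : Set (List (Fin θ))) : Submodule ℂ (TV θ ⊗[ℂ] TV θ) :=
  Submodule.span ℂ {x | ∃ w ∈ Ws, ∃ t : TV θ, x = wordElem θ w ⊗ₜ[ℂ] t}

lemma contract_congr (S : BraidedStr θ q) {Ws : Set (List (Fin θ))} {u : TV θ}
    (hu : S.Δ u ∈ leftSpan Ws) {h h' : TV θ →ₗ[ℂ] ℂ}
    (hh : ∀ w ∈ Ws, h (wordElem θ w) = h' (wordElem θ w)) : contract S h u = contract S h' u := by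
  have key : Set.EqOn (h.rTensor (TV θ)) (h'.rTensor (TV θ)) (leftSpan Ws) := by
    refine LinearMap.eqOn_span' ?_
    rintro _ ⟨w, hw, t, rfl⟩
    rw [LinearMap.rTensor_tmul, LinearMap.rTensor_tmul, hh w hw]
  exact congrArg (TensorProduct.lid ℂ (TV θ)) (key hu)

lemma Δ_wordElem_mul_mem_leftSpan (S : BraidedStr θ q) {v : List (Fin θ)}
    (hv : IsPrimitiveIn S (wordElem θ v)) {Ws : Set (List (Fin θ))}
    (hWs : ∀ w ∈ Ws, v ++ w ∈ Ws) {u : TV θ} (hu : S.Δ u ∈ leftSpan Ws) :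
    S.Δ (wordElem θ v * u) ∈ leftSpan Ws := by
  rw [S.Δ_mul, hv]
  suffices leftSpan Ws ≤ (leftSpan Ws).comap
    (S.mulB (wordElem θ v ⊗ₜ[ℂ] 1 + 1 ⊗ₜ[ℂ] wordElem θ v)) from this hu
  refine Submodule.span_le.2 ?_
  rintro _ ⟨w, hw, t, rfl⟩
  rw [SetLike.mem_coe, Submodule.mem_comap, map_add, LinearMap.add_apply, mulB_tmul_one,
    mulB_one_tmul, ← wordElem_append]
  exact Submodule.add_mem _ (Submodule.subset_span ⟨_, hWs w hw, _, rfl⟩)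
    (Submodule.smul_mem _ _ (Submodule.subset_span ⟨w, hw, _, rfl⟩))

/-- The skew derivation of `T(V)` dual to `x_l`. -/
def skewDer (S : BraidedStr θ q) (l : Fin θ) : TV θ →ₗ[ℂ] TV θ := contract S (coord [l])

lemma skewDer_one (S : BraidedStr θ q) (l : Fin θ) : skewDer S l 1 = 0 := by
  rw [skewDer, contract_one, coord_one, if_neg (List.cons_ne_nil _ _).symm, zero_smul]

lemma skewDer_gen_self_mul (S : BraidedStr θ q) (k : Fin θ) (u : TV θ) :
    skewDer S k (gen θ k * u) = u + (q k k : ℂ) • (gen θ k * skewDer S k u) := by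
  have h := contract_coord_append_wordElem_mul S (isPrimitiveIn_wordElem_singleton S k) [] u
  rwa [contract_coord_nil, List.append_nil, degW_singleton, qf_single, mul_one, pow_one,
    wordElem_singleton] at h

lemma skewDer_gen_mul_of_ne (S : BraidedStr θ q) {k l : Fin θ} (hkl : k ≠ l) (u : TV θ) :
    skewDer S l (gen θ k * u) = (q k l : ℂ) • (gen θ k * skewDer S l u) := by
  have h := contract_coord_wordElem_mul_of_not_prefix S (isPrimitiveIn_wordElem_singleton S k)
    (w := [l]) (by simpa using hkl) u
  rwa [degW_singleton, degW_singleton, qf_single, mul_one, pow_one, wordElem_singleton] at h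

lemma skewDer_gen_self_pow (S : BraidedStr θ q) (k : Fin θ) (n : ℕ) :
    skewDer S k (gen θ k ^ (n + 1)) = qnum (q k k) (n + 1) • gen θ k ^ n := by
  induction n with
  | zero =>
    rw [zero_add, pow_one, ← mul_one (gen θ k), skewDer_gen_self_mul, skewDer_one]
    simp [qnum]
  | succ n ih =>
    have hq : qnum (q k k) (n + 2) = 1 + (q k k : ℂ) * qnum (q k k) (n + 1) := by
      rw [qnum, geom_sum_succ, add_comm, qnum]
    rw [pow_succ', skewDer_gen_self_mul, ih, hq, mul_smul_comm, ← pow_succ', smul_smul, add_smul,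
      one_smul]

lemma skewDer_gen_pow_mul_of_ne (S : BraidedStr θ q) {k l : Fin θ} (hkl : k ≠ l) (n : ℕ)
    (u : TV θ) :
    skewDer S l (gen θ k ^ n * u) = (q k l : ℂ) ^ n • (gen θ k ^ n * skewDer S l u) := by
  induction n with
  | zero => simp
  | succ n ih =>
    rw [pow_succ', mul_assoc, skewDer_gen_mul_of_ne S hkl, ih, mul_smul_comm, smul_smul,
      ← pow_succ', mul_assoc]

lemma mulB_one_tmul_gen_mul_mulB_gen_tmul_one (S : BraidedStr θ q) (i : Fin θ) :
    (S.mulB (1 ⊗ₜ[ℂ] gen θ i) * S.mulB (gen θ i ⊗ₜ[ℂ] 1) : Module.End ℂ (TV θ ⊗[ℂ] TV θ))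
      = (q i i : ℂ) • (S.mulB (gen θ i ⊗ₜ[ℂ] 1) * S.mulB (1 ⊗ₜ[ℂ] gen θ i)) :=
  tensorProduct_ext_wordElem fun w t => by
    rw [LinearMap.smul_apply, Module.End.mul_apply, Module.End.mul_apply, ← wordElem_singleton,
      mulB_one_tmul, map_smul, mulB_tmul_one, mulB_tmul_one, ← wordElem_append, mulB_one_tmul,
      degW_append, qf_add_right, degW_singleton, qf_single, one_mul, pow_one, smul_smul]

lemma mulB_gen_tmul_one_pow (S : BraidedStr θ q) (i : Fin θ) (n : ℕ) :
    ((S.mulB (gen θ i ⊗ₜ[ℂ] 1) : Module.End ℂ (TV θ ⊗[ℂ] TV θ)) ^ n) (1 ⊗ₜ[ℂ] 1)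
      = (gen θ i ^ n) ⊗ₜ[ℂ] 1 := by
  induction n with
  | zero => simp
  | succ n ih =>
    rw [pow_succ', Module.End.mul_apply, ih, ← wordElem_replicate, mulB_tmul_one,
      wordElem_replicate, ← pow_succ']

lemma mulB_one_tmul_gen_pow (S : BraidedStr θ q) (i : Fin θ) (n : ℕ) :
    ((S.mulB (1 ⊗ₜ[ℂ] gen θ i) : Module.End ℂ (TV θ ⊗[ℂ] TV θ)) ^ n) (1 ⊗ₜ[ℂ] 1)
      = 1 ⊗ₜ[ℂ] (gen θ i ^ n) := by
  induction n with
  | zero => simp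
  | succ n ih =>
    have h := mulB_one_tmul S (gen θ i ^ n) [i] []
    rw [wordElem_nil, degW_nil, qf_zero_right, one_smul, wordElem_singleton, ← pow_succ'] at h
    rw [pow_succ', Module.End.mul_apply, ih, h]

/-- `x_i ⊗ 1` and `1 ⊗ x_i` commute up to `q_ii`, so the q-binomial theorem applies to the powers
of their sum `Δ x_i`. -/
lemma isPrimitiveIn_gen_pow (S : BraidedStr θ q) {i : Fin θ} {N : ℕ} (hN : N ≠ 0)
    (hq : IsPrimitiveRoot (q i i : ℂ) N) : IsPrimitiveIn S (gen θ i ^ N) := by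
  have hΔ : ∀ n, S.Δ (gen θ i ^ n)
      = ((S.mulB (gen θ i ⊗ₜ[ℂ] 1) + S.mulB (1 ⊗ₜ[ℂ] gen θ i) :
          Module.End ℂ (TV θ ⊗[ℂ] TV θ)) ^ n) (1 ⊗ₜ[ℂ] 1) := by
    intro n
    induction n with
    | zero => rw [pow_zero, pow_zero, S.Δ_one, Module.End.one_apply]
    | succ n ih =>
      rw [pow_succ', S.Δ_mul, S.Δ_gen, ih, pow_succ', Module.End.mul_apply, map_add]
  have hpow := add_pow_eq_add_of_isPrimitiveRoot (E := Module.End ℂ (TV θ ⊗[ℂ] TV θ))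
    (mulB_one_tmul_gen_mul_mulB_gen_tmul_one S i) hN hq
  exact (hΔ N).trans <| (LinearMap.congr_fun hpow _).trans <|
    congrArg₂ (· + ·) (mulB_gen_tmul_one_pow S i N) (mulB_one_tmul_gen_pow S i N)

end Contraction

section PreNicholsIdeals

variable {θ : ℕ} {q : Fin θ → Fin θ → ℂˣ} {S : BraidedStr θ q} {I : Submodule ℂ (TV θ)}

namespace IsPreNicholsIdeal

lemma coord_eq_zero (hI : IsPreNicholsIdeal S I) {w : List (Fin θ)} (hw : w.length < 2)
    {u : TV θ} (hu : u ∈ I) : coord w u = 0 := by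
  suffices I ≤ LinearMap.ker (coord w) from this hu
  rw [hI.homog_ge2, Submodule.span_le]
  rintro x ⟨-, n, hn, hx⟩
  exact coord_of_mem_homogTot hx (by omega)

lemma one_notMem (hI : IsPreNicholsIdeal S I) : (1 : TV θ) ∉ I := fun h => by
  simpa [coord_one] using hI.coord_eq_zero (w := []) (by simp) h

lemma degProj_mem (hI : IsPreNicholsIdeal S I) (n : ℕ) {u : TV θ} (hu : u ∈ I) :
    degProj n u ∈ I := by
  suffices I ≤ I.comap (degProj n) from this hu
  conv_lhs => rw [hI.homog_ge2]
  rw [Submodule.span_le]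
  rintro x ⟨hxI, m, -, hx⟩
  rw [SetLike.mem_coe, Submodule.mem_comap, degProj_of_mem_homogTot hx]
  split_ifs
  exacts [hxI, I.zero_mem]

lemma contract_mem (hI : IsPreNicholsIdeal S I) {h : TV θ →ₗ[ℂ] ℂ} (hh : ∀ u ∈ I, h u = 0)
    {u : TV θ} (hu : u ∈ I) : contract S h u ∈ I := by
  suffices mixedSub I ≤ I.comap ((TensorProduct.lid ℂ (TV θ)).toLinearMap ∘ₗ h.rTensor (TV θ)) from
    this (hI.coideal u hu)
  refine Submodule.span_le.2 ?_
  rintro _ (⟨a, b, ha, rfl⟩ | ⟨a, b, hb, rfl⟩)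
  · simp [hh a ha]
  · simpa using I.smul_mem _ hb

lemma skewDer_mem (hI : IsPreNicholsIdeal S I) (l : Fin θ) {u : TV θ} (hu : u ∈ I) :
    skewDer S l u ∈ I :=
  hI.contract_mem (fun _ hv => hI.coord_eq_zero (by simp) hv) hu

end IsPreNicholsIdeal

lemma skewDer_mem_Jq (S : BraidedStr θ q) (l : Fin θ) {u : TV θ} (hu : u ∈ Jq S) :
    skewDer S l u ∈ Jq S := by
  suffices Jq S ≤ (Jq S).comap (skewDer S l) from this hu
  exact sSup_le fun I hI _ hv => le_sSup (a := I) hI (hI.skewDer_mem l hv)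

lemma one_notMem_Jq (S : BraidedStr θ q) : (1 : TV θ) ∉ Jq S := fun h => by
  have hle : Jq S ≤ LinearMap.ker (coord []) :=
    sSup_le fun I hI _ hv => IsPreNicholsIdeal.coord_eq_zero hI (by simp) hv
  simpa [coord_one] using hle h

lemma qnum_eq_zero_iff {t : ℂ} (ht : t ≠ 1) (n : ℕ) : qnum t n = 0 ↔ t ^ n = 1 := by
  rw [← sub_eq_zero (a := t ^ n), ← mul_geom_sum, mul_eq_zero_iff_left (sub_ne_zero.2 ht), qnum]

lemma exists_qnum_eq_zero (S : BraidedStr θ q) [FiniteDimensional ℂ (TV θ ⧸ Jq S)] (i : Fin θ) :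
    ∃ n ≠ 0, qnum (q i i) n = 0 := by
  by_contra! h
  have hli : LinearIndependent ℂ fun n => (Jq S).mkQ (gen θ i ^ n) := by
    refine linearIndependent_of_lowering (c := fun n => qnum (q i i) (n + 1))
      (D := (Jq S).mapQ (Jq S) (skewDer S i) fun _ => skewDer_mem_Jq S i) ?_ ?_ (fun n => ?_)
      fun n => h _ n.succ_ne_zero
    · simpa [Submodule.Quotient.mk_eq_zero] using one_notMem_Jq S
    · rw [pow_zero, Submodule.mkQ_apply, Submodule.mapQ_apply, skewDer_one,
        Submodule.Quotient.mk_zero]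
    · rw [Submodule.mkQ_apply, Submodule.mapQ_apply, skewDer_gen_self_pow,
        Submodule.Quotient.mk_smul, Submodule.mkQ_apply]
  exact Module.Finite.not_linearIndependent_of_infinite _ hli

lemma one_lt_orderOf (S : BraidedStr θ q) [FiniteDimensional ℂ (TV θ ⧸ Jq S)] (i : Fin θ) :
    1 < orderOf (q i i) := by
  obtain ⟨n, hn, h0⟩ := exists_qnum_eq_zero S i
  have hne : q i i ≠ 1 := fun h1 => hn (by simpa [qnum, h1] using h0)
  have hpow : q i i ^ n = 1 := Units.ext <| by
    simpa using (qnum_eq_zero_iff (fun h => hne (Units.ext h)) n).1 h0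
  have hpos := orderOf_pos_iff.2 (isOfFinOrder_iff_pow_eq_one.2 ⟨n, Nat.pos_of_ne_zero hn, hpow⟩)
  have hone := mt orderOf_eq_one_iff.1 hne
  omega

namespace IsPreNicholsIdeal

lemma smul_gen_pow_mem_of_qnum_ne_zero (hI : IsPreNicholsIdeal S I) {k l : Fin θ} (hkl : k ≠ l)
    {n : ℕ} (hn : n ≠ 0) {a b : ℂ} (h : a • gen θ k ^ n + b • gen θ l ^ n ∈ I)
    (hl : qnum (q l l) n ≠ 0) : b • gen θ l ^ n ∈ I := by
  obtain ⟨n, rfl⟩ := Nat.exists_eq_succ_of_ne_zero hn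
  have hk0 : skewDer S l (gen θ k ^ (n + 1)) = 0 := by
    simpa [skewDer_one] using skewDer_gen_pow_mul_of_ne S hkl (n + 1) 1
  have hder := hI.skewDer_mem l h
  rw [map_add, map_smul, map_smul, hk0, smul_zero, zero_add, skewDer_gen_self_pow, smul_comm,
    I.smul_mem_iff hl] at hder
  rw [Nat.succ_eq_add_one, pow_succ', ← mul_smul_comm]
  exact hI.mul_left _ _ hder

lemma smul_gen_pow_mem_of_qnum_eq_zero (hI : IsPreNicholsIdeal S I) {k l : Fin θ} (hkl : k ≠ l)
    {n : ℕ} {a b : ℂ} (h : a • gen θ k ^ n + b • gen θ l ^ n ∈ I) (hl : qnum (q l l) n = 0)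
    (hq : (q k l : ℂ) ^ n ≠ 1) : a • gen θ k ^ n ∈ I := by
  have hgl : skewDer S l (gen θ l) = 1 := by
    simpa [qnum] using skewDer_gen_self_pow S l 0
  have hqn : qnum (q l l) (n + 1) = 1 := by
    rw [qnum, geom_sum_succ, ← qnum, hl, mul_zero, zero_add]
  have hder := hI.skewDer_mem l (hI.mul_right (gen θ l) _ h)
  rw [add_mul, smul_mul_assoc, smul_mul_assoc, ← pow_succ, map_add, map_smul, map_smul,
    skewDer_gen_pow_mul_of_ne S hkl, hgl, mul_one, skewDer_gen_self_pow, hqn, one_smul,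
    smul_comm a] at hder
  have hsub := I.sub_mem hder h
  rw [add_sub_add_right_eq_sub] at hsub
  refine (I.smul_mem_iff (sub_ne_zero.2 hq)).1 ?_
  rwa [sub_smul, one_smul]

lemma gen_pow_notMem_sup_span (hI : IsPreNicholsIdeal S I) {i j : Fin θ} (hij : i ≠ j) {N : ℕ}
    (hN : 1 < N) (hq : IsPrimitiveRoot (q i i : ℂ) N)
    (hab : (q j i : ℂ) ^ N * (q i j : ℂ) ^ N ≠ 1) (hy : gen θ i ^ N ∉ I) :
    gen θ i ^ N ∉ I ⊔ ℂ ∙ gen θ j ^ N := by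
  intro h
  obtain ⟨u, hu, v, hv, huv⟩ := Submodule.mem_sup.1 h
  obtain ⟨c, rfl⟩ := Submodule.mem_span_singleton.1 hv
  have hmem : (1 : ℂ) • gen θ i ^ N + (-c) • gen θ j ^ N ∈ I := by
    rwa [one_smul, neg_smul, ← sub_eq_add_neg, ← huv, add_sub_cancel_right]
  have hc : (-c) • gen θ j ^ N ∉ I := fun hc => hy <| by
    simpa using I.sub_mem hmem hc
  have hi0 : qnum (q i i) N = 0 := hq.geom_sum_eq_zero hN
  have hj0 : qnum (q j j) N = 0 := by
    by_contra hj
    exact hc (hI.smul_gen_pow_mem_of_qnum_ne_zero hij (by omega) hmem hj)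
  have hij1 : (q i j : ℂ) ^ N = 1 := by
    by_contra hne
    exact hy (by simpa using hI.smul_gen_pow_mem_of_qnum_eq_zero hij hmem hj0 hne)
  have hji1 : (q j i : ℂ) ^ N = 1 := by
    by_contra hne
    rw [add_comm] at hmem
    exact hc (hI.smul_gen_pow_mem_of_qnum_eq_zero hij.symm hmem hi0 hne)
  exact hab (by rw [hij1, hji1, one_mul])

end IsPreNicholsIdeal

end PreNicholsIdeals

section Blocks

variable {θ : ℕ} {q : Fin θ → Fin θ → ℂˣ} {S : BraidedStr θ q} {I : Submodule ℂ (TV θ)} {N : ℕ}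
  {i j : Fin θ}

/-- The words composed of the blocks `i^N` and `j`. -/
inductive IsBlockWord (N : ℕ) (i j : Fin θ) : List (Fin θ) → Prop
  | nil : IsBlockWord N i j []
  | replicate_append {w : List (Fin θ)} :
      IsBlockWord N i j w → IsBlockWord N i j (List.replicate N i ++ w)
  | singleton_append {w : List (Fin θ)} : IsBlockWord N i j w → IsBlockWord N i j ([j] ++ w)

lemma IsBlockWord.eq_replicate_or_lt_length {w : List (Fin θ)} (hw : IsBlockWord N i j w) :
    (∃ n, w = List.replicate n j) ∨ w = List.replicate N i ∨ N < w.length := by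
  induction hw with
  | nil => exact .inl ⟨0, rfl⟩
  | @replicate_append w _ _ =>
    rcases w.length.eq_zero_or_pos.imp_left List.eq_nil_of_length_eq_zero with rfl | hpos
    · exact .inr (.inl (List.append_nil _))
    · refine .inr (.inr ?_)
      rw [List.length_append, List.length_replicate]
      omega
  | singleton_append _ ih =>
    rcases ih with ⟨n, rfl⟩ | rfl | hlt
    · exact .inl ⟨n + 1, rfl⟩
    · exact .inr (.inr (by simp))
    · exact .inr (.inr (by simpa using hlt.trans (Nat.lt_succ_self _)))

/-- The subalgebra of `T(V)` generated by `x_i^N` and `x_j`, as the span of the words in these two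
elements. -/
def blockSpan (N : ℕ) (i j : Fin θ) : Submodule ℂ (TV θ) :=
  Submodule.span ℂ (wordElem θ '' {w | IsBlockWord N i j w})

lemma one_mem_blockSpan : (1 : TV θ) ∈ blockSpan N i j :=
  Submodule.subset_span ⟨[], .nil, rfl⟩

lemma gen_pow_mul_mem_blockSpan {u : TV θ} (hu : u ∈ blockSpan N i j) :
    gen θ i ^ N * u ∈ blockSpan N i j := by
  suffices blockSpan N i j ≤ (blockSpan N i j).comap (LinearMap.mulLeft ℂ (gen θ i ^ N)) from
    this hu
  refine Submodule.span_le.2 ?_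
  rintro _ ⟨w, hw, rfl⟩
  exact Submodule.subset_span
    ⟨_, hw.replicate_append, by rw [wordElem_append, wordElem_replicate, LinearMap.mulLeft_apply]⟩

lemma gen_mul_mem_blockSpan {u : TV θ} (hu : u ∈ blockSpan N i j) :
    gen θ j * u ∈ blockSpan N i j := by
  suffices blockSpan N i j ≤ (blockSpan N i j).comap (LinearMap.mulLeft ℂ (gen θ j)) from this hu
  refine Submodule.span_le.2 ?_
  rintro _ ⟨w, hw, rfl⟩
  exact Submodule.subset_span
    ⟨_, hw.singleton_append, by rw [wordElem_append, wordElem_singleton, LinearMap.mulLeft_apply]⟩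

lemma blockSpan_le {P : Submodule ℂ (TV θ)} (h1 : 1 ∈ P)
    (hi : ∀ u ∈ blockSpan N i j, u ∈ P → gen θ i ^ N * u ∈ P)
    (hj : ∀ u ∈ blockSpan N i j, u ∈ P → gen θ j * u ∈ P) : blockSpan N i j ≤ P := by
  refine Submodule.span_le.2 ?_
  rintro _ ⟨w, hw, rfl⟩
  induction hw with
  | nil => exact h1
  | replicate_append hw ih =>
    rw [wordElem_append, wordElem_replicate]
    exact hi _ (Submodule.subset_span ⟨_, hw, rfl⟩) ih
  | singleton_append hw ih =>
    rw [wordElem_append, wordElem_singleton]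
    exact hj _ (Submodule.subset_span ⟨_, hw, rfl⟩) ih

lemma blockSpan_le_comap_Δ (hy : IsPrimitiveIn S (gen θ i ^ N)) :
    blockSpan N i j ≤ (leftSpan {w | IsBlockWord N i j w}).comap S.Δ := by
  refine blockSpan_le ?_ (fun u _ hu => ?_) fun u _ hu => ?_
  · rw [Submodule.mem_comap, S.Δ_one]
    exact Submodule.subset_span ⟨[], .nil, 1, rfl⟩
  · rw [← wordElem_replicate]
    exact Δ_wordElem_mul_mem_leftSpan S (by rwa [wordElem_replicate])
      (fun _ hw => hw.replicate_append) hu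
  · rw [← wordElem_singleton]
    exact Δ_wordElem_mul_mem_leftSpan S (isPrimitiveIn_wordElem_singleton S j)
      (fun _ hw => hw.singleton_append) hu

lemma braidedWeylRel_gen_gen_pow (S : BraidedStr θ q) (hij : i ≠ j) (hN : N ≠ 0)
    (hq : IsPrimitiveRoot (q i i : ℂ) N) :
    BraidedWeylRel (E := Module.End ℂ (TV θ)) (LinearMap.mulLeft ℂ (gen θ j))
      (LinearMap.mulLeft ℂ (gen θ i ^ N)) (skewDer S j) (contract S (coord (List.replicate N i)))
      ((q j i : ℂ) ^ N) ((q i j : ℂ) ^ N) (q j j : ℂ) where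
  dy_mul_y := LinearMap.ext fun u => by
    have h := contract_coord_append_wordElem_mul S (v := List.replicate N i)
      (by simpa only [wordElem_replicate] using isPrimitiveIn_gen_pow S hN hq) [] u
    rwa [contract_coord_nil, List.append_nil, degW_replicate, qf_single, pow_mul, hq.pow_eq_one,
      one_pow, one_smul, wordElem_replicate] at h
  dy_mul_x := LinearMap.ext fun u => by
    have hji : ¬ [j] <+: List.replicate N i := fun h =>
      hij (List.eq_of_mem_replicate (h.subset (List.mem_singleton_self j))).symm
    have h := contract_coord_wordElem_mul_of_not_prefix S (isPrimitiveIn_wordElem_singleton S j)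
      hji u
    rwa [degW_replicate, degW_singleton, qf_single, one_mul, wordElem_singleton] at h
  dx_mul_y := LinearMap.ext (skewDer_gen_pow_mul_of_ne S hij N)
  dx_mul_x := LinearMap.ext (skewDer_gen_self_mul S j)

lemma actsOnSubquotient_skewDer (hI : IsPreNicholsIdeal S I) (hij : i ≠ j) :
    ActsOnSubquotient (blockSpan N i j) I (skewDer S j) where
  mem_left := by
    refine blockSpan_le (P := (blockSpan N i j).comap (skewDer S j)) ?_ (fun u _ hDu => ?_)
      fun u hu hDu => ?_
    · rw [Submodule.mem_comap, skewDer_one]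
      exact Submodule.zero_mem _
    · rw [Submodule.mem_comap, skewDer_gen_pow_mul_of_ne S hij]
      exact Submodule.smul_mem _ _ (gen_pow_mul_mem_blockSpan hDu)
    · rw [Submodule.mem_comap, skewDer_gen_self_mul]
      exact Submodule.add_mem _ hu (Submodule.smul_mem _ _ (gen_mul_mem_blockSpan hDu))
  mem_right _ _ hu := hI.skewDer_mem j hu

lemma contract_coord_replicate_one (S : BraidedStr θ q) (hN : N ≠ 0) (i : Fin θ) :
    contract S (coord (List.replicate N i)) 1 = 0 := by
  rw [contract_one, coord_one, if_neg fun h => hN ((List.replicate_eq_nil_iff i).1 h.symm),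
    zero_smul]

lemma exists_functional_eq_coord_replicate (hI : IsPreNicholsIdeal S I) (hij : i ≠ j)
    (hN : 1 < N) (hq : IsPrimitiveRoot (q i i : ℂ) N)
    (hab : (q j i : ℂ) ^ N * (q i j : ℂ) ^ N ≠ 1) (hy : gen θ i ^ N ∉ I) :
    ∃ f : TV θ →ₗ[ℂ] ℂ, (∀ u ∈ I, f u = 0) ∧ ∀ w, IsBlockWord N i j w →
      f (wordElem θ w) = coord (List.replicate N i) (wordElem θ w) := by
  have hmem : gen θ i ^ N ∉ I ⊔ ℂ ∙ gen θ j ^ N := hI.gen_pow_notMem_sup_span hij hN hq hab hy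
  obtain ⟨g, hgy, hg⟩ := Submodule.exists_le_ker_of_notMem hmem
  refine ⟨(g (gen θ i ^ N))⁻¹ • g ∘ₗ degProj N, fun u hu => ?_, fun w hw => ?_⟩
  · have hgu : g (degProj N u) = 0 := hg (Submodule.mem_sup_left (hI.degProj_mem N hu))
    rw [LinearMap.smul_apply, LinearMap.comp_apply, hgu, smul_zero]
  · rw [LinearMap.smul_apply, LinearMap.comp_apply, degProj_wordElem, coord_wordElem, smul_eq_mul]
    rcases hw.eq_replicate_or_lt_length with ⟨n, rfl⟩ | rfl | hlt
    · have hi : i ∉ List.replicate n j := fun h => hij (List.eq_of_mem_replicate h)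
      have hne : List.replicate n j ≠ List.replicate N i := fun h =>
        hi (h ▸ List.mem_replicate.2 ⟨(Nat.zero_lt_of_lt hN).ne', rfl⟩)
      have hgj : g (gen θ j ^ N) = 0 :=
        hg (Submodule.mem_sup_right (Submodule.mem_span_singleton_self _))
      rw [if_neg hne, List.length_replicate]
      split_ifs with hn
      · rw [wordElem_replicate, hn, hgj, mul_zero]
      · rw [map_zero, mul_zero]
    · rw [if_pos rfl, if_pos List.length_replicate, wordElem_replicate, inv_mul_cancel₀ hgy]
    · have hne : w ≠ List.replicate N i := by
        rintro rfl
        simp at hlt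
      rw [if_neg hlt.ne', if_neg hne, map_zero, mul_zero]

/-- The functional `coord (i^N)` need not vanish on `I`, but on block words it agrees with one that
does. -/
lemma actsOnSubquotient_contract_coord_replicate (hI : IsPreNicholsIdeal S I) (hij : i ≠ j)
    (hN : 1 < N) (hq : IsPrimitiveRoot (q i i : ℂ) N)
    (hab : (q j i : ℂ) ^ N * (q i j : ℂ) ^ N ≠ 1) (hy : gen θ i ^ N ∉ I) :
    ActsOnSubquotient (blockSpan N i j) I (contract S (coord (List.replicate N i))) where
  mem_left := by
    set D := contract S (coord (List.replicate N i))
    have hrel := braidedWeylRel_gen_gen_pow S hij (by omega) hq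
    have hDy : ∀ u, D (gen θ i ^ N * u) = u + gen θ i ^ N * D u :=
      LinearMap.congr_fun hrel.dy_mul_y
    have hDx : ∀ u, D (gen θ j * u) = (q j i : ℂ) ^ N • (gen θ j * D u) :=
      LinearMap.congr_fun hrel.dy_mul_x
    refine blockSpan_le (P := (blockSpan N i j).comap D) ?_ (fun u hu hDu => ?_) fun u _ hDu => ?_
    · rw [Submodule.mem_comap, contract_coord_replicate_one S (by omega)]
      exact Submodule.zero_mem _
    · rw [Submodule.mem_comap, hDy]
      exact Submodule.add_mem _ hu (gen_pow_mul_mem_blockSpan hDu)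
    · rw [Submodule.mem_comap, hDx]
      exact Submodule.smul_mem _ _ (gen_mul_mem_blockSpan hDu)
  mem_right u hu huI := by
    obtain ⟨f, hfI, hf⟩ := exists_functional_eq_coord_replicate hI hij hN hq hab hy
    have hΔ := blockSpan_le_comap_Δ (isPrimitiveIn_gen_pow S (by omega) hq) hu
    rw [← contract_congr S hΔ hf]
    exact hI.contract_mem hfI huI

lemma IsPreNicholsIdeal.two_pow_le_finrank (hI : IsPreNicholsIdeal S I) (hij : i ≠ j)
    (hN : 1 < N) (hq : IsPrimitiveRoot (q i i : ℂ) N)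
    (hab : (q j i : ℂ) ^ N * (q i j : ℂ) ^ N ≠ 1) (hy : gen θ i ^ N ∉ I) (k : ℕ) :
    2 ^ k ≤ Module.finrank ℂ ((Wfil θ (k * k * N)).map I.mkQ) := by
  have hN0 : N ≠ 0 := by omega
  have hx : ActsOnSubquotient (blockSpan N i j) I (LinearMap.mulLeft ℂ (gen θ j)) :=
    ⟨fun _ => gen_mul_mem_blockSpan, fun u _ => hI.mul_left _ u⟩
  have hz : ActsOnSubquotient (blockSpan N i j) I (LinearMap.mulLeft ℂ (gen θ i ^ N)) :=
    ⟨fun _ => gen_pow_mul_mem_blockSpan, fun u _ => hI.mul_left _ u⟩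
  have hWx : ∀ n, Wfil θ n ≤ (Wfil θ (n + N)).comap (LinearMap.mulLeft ℂ (gen θ j)) := by
    intro n u hu
    rw [← wordElem_singleton]
    exact wordElem_mul_mem_Wfil hN.le hu
  have hWz : ∀ n, Wfil θ n ≤ (Wfil θ (n + N)).comap (LinearMap.mulLeft ℂ (gen θ i ^ N)) := by
    intro n u hu
    rw [← wordElem_replicate]
    exact wordElem_mul_mem_Wfil List.length_replicate.le hu
  exact (braidedWeylRel_gen_gen_pow S hij hN0 hq).two_pow_le_finrank_map_mkQ hab hx hz
    (actsOnSubquotient_skewDer hI hij)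
    (actsOnSubquotient_contract_coord_replicate hI hij hN hq hab hy) one_mem_blockSpan
    hI.one_notMem (skewDer_one S j) (contract_coord_replicate_one S hN0 i) Wfil_mono hWx hWz
    (Submodule.subset_span ⟨[], le_rfl, rfl⟩) k

end Blocks

lemma exists_const_mul_pow_lt_two_pow (C d N : ℕ) :
    ∃ k : ℕ, C * (k * k * N + 1) ^ d < 2 ^ k := by
  have htends := (tendsto_pow_const_div_const_pow_of_one_lt (2 * d) (r := 2)
    one_lt_two).const_mul ((C : ℝ) * (N + 1) ^ d)
  rw [mul_zero] at htends
  obtain ⟨k, hk, hk1⟩ := ((htends.eventually_lt_const one_pos).and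
    (Filter.eventually_ge_atTop 1)).exists
  have hle : C * (k * k * N + 1) ^ d ≤ C * (N + 1) ^ d * k ^ (2 * d) := by
    rw [mul_assoc C, pow_mul, ← mul_pow]
    gcongr
    nlinarith
  rw [← mul_div_assoc, div_lt_one (by positivity)] at hk
  exact ⟨k, hle.trans_lt (by exact_mod_cast hk)⟩

section CartanVertices

variable {θ : ℕ} {q : Fin θ → Fin θ → ℂˣ} {i j : Fin θ}

lemma pow_mul_eq_one_of_mem_cSet_of_le {m n : ℕ} (hN : 1 < orderOf (q i i))
    (hn : n ∈ cSet q i j) (hnm : n ≤ m) (hm : m < orderOf (q i i))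
    (h : q i i ^ m * (q i j * q j i) = 1) : q i i ^ n * (q i j * q j i) = 1 := by
  rcases mul_eq_zero.1 hn with h0 | h0
  · have hne : (q i i : ℂ) ≠ 1 := fun h1 => hN.ne' (orderOf_eq_one_iff.2 (Units.ext h1))
    have hpow : q i i ^ (n + 1) = 1 := Units.ext (by simpa using (qnum_eq_zero_iff hne _).1 h0)
    have hdvd := Nat.le_of_dvd n.succ_pos (orderOf_dvd_of_pow_eq_one hpow)
    rwa [show n = m by omega]
  · exact Units.ext (by simpa [qtil] using (sub_eq_zero.1 h0).symm)

lemma eq_zpow_neg_sInf_cSet_of_pow_orderOf_eq_one (hN : 1 < orderOf (q i i))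
    (h : (q i j * q j i) ^ orderOf (q i i) = 1) :
    q i j * q j i = q i i ^ (-(Int.ofNat (sInf (cSet q i j)))) := by
  have : NeZero (orderOf (q i i)) := ⟨by omega⟩
  obtain ⟨m, hm, hmq⟩ := (IsPrimitiveRoot.coe_units_iff.2
    (IsPrimitiveRoot.orderOf (q i i))).eq_pow_of_pow_eq_one (ξ := (((q i j * q j i)⁻¹ : ℂˣ) : ℂ))
      (by rw [← Units.val_pow_eq_pow_val, inv_pow, h, inv_one, Units.val_one])
  have hinv : q i i ^ m = (q i j * q j i)⁻¹ := Units.ext (by rw [Units.val_pow_eq_pow_val, hmq])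
  have hm1 : q i i ^ m * (q i j * q j i) = 1 := by rw [hinv, inv_mul_cancel]
  have hmem : m ∈ cSet q i j := mul_eq_zero_of_right _ <| sub_eq_zero.2 <| by
    simpa [qtil] using (congrArg Units.val hm1).symm
  rw [zpow_neg, eq_inv_iff_mul_eq_one, Int.ofNat_eq_natCast, zpow_natCast, mul_comm]
  exact pow_mul_eq_one_of_mem_cSet_of_le hN (Nat.sInf_mem ⟨m, hmem⟩) (Nat.sInf_le hmem) hm hm1

end CartanVertices

theorem statement_4_general (θ : ℕ) (q : Fin θ → Fin θ → ℂˣ) (S : BraidedStr θ q)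
    (I : Submodule ℂ (TV θ)) (hI : IsPreNicholsIdeal S I) (hGK : FinGK I)
    (i : Fin θ) (hN : 1 < orderOf (q i i))
    (hnc : ∃ j : Fin θ, j ≠ i ∧ q i j * q j i ≠ q i i ^ (-(Int.ofNat (sInf (cSet q i j))))) :
    gen θ i ^ orderOf (q i i) ∈ I := by
  obtain ⟨j, hji, hj⟩ := hnc
  by_contra hy
  have hq : IsPrimitiveRoot (q i i : ℂ) (orderOf (q i i)) :=
    IsPrimitiveRoot.coe_units_iff.2 (IsPrimitiveRoot.orderOf (q i i))
  have hab : (q j i : ℂ) ^ orderOf (q i i) * (q i j : ℂ) ^ orderOf (q i i) ≠ 1 := by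
    rw [← mul_pow, mul_comm]
    exact fun h => hj <|
      eq_zpow_neg_sInf_cSet_of_pow_orderOf_eq_one hN (Units.ext (by simpa using h))
  obtain ⟨C, d, hCd⟩ := hGK
  obtain ⟨k, hk⟩ := exists_const_mul_pow_lt_two_pow C d (orderOf (q i i))
  exact hk.not_ge ((hI.two_pow_le_finrank hji.symm hN hq hab hy k).trans (hCd _))

/-- Lemma 3.1(d): if `i` is a non-Cartan vertex, i.e.
`q̃_{ij} ≠ q_{ii}^{c_{ij}}` for some `j ≠ i`, then `x_i^{N_i} = 0`
(`N_i = ord q_{ii}`) in every finite-GKdim pre-Nichols algebra of `q`. -/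
theorem statement_4 (θ : ℕ) (q : Fin θ → Fin θ → ℂˣ) (S : BraidedStr θ q)
    (hconn : (dynkin q).Connected)
    (hfd : FiniteDimensional ℂ (TV θ ⧸ Jq S))
    (hAAH : AAH)
    (I : Submodule ℂ (TV θ)) (hI : IsPreNicholsIdeal S I) (hGK : FinGK I)
    (i : Fin θ)
    (hnc : ∃ j : Fin θ, j ≠ i ∧ q i j * q j i ≠ q i i ^ (-(Int.ofNat (sInf (cSet q i j))))) :
    gen θ i ^ orderOf (q i i) ∈ I := by
  exact statement_4_general θ q S I hI hGK i (one_lt_orderOf S i) hnc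

end PreNicholsPaper
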